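/- If G is a graph on n vertices with matching number ν(G) ≤ k−1, then e(G) ≤ max{C(2k−1,2), C(k−1,2) + (k−1)(n−k+1)}. -/

import Mathlib

/-!
The proof is by shifting (compression). Number the vertices `0, …, n-1` and regard the edges as a
family of pairs. For `i < j`, the shift that replaces `j` by `i` in each edge, whenever this gives a
pair that is not yet an edge, preserves the number of edges and does not create a larger matching
(`HasMatching.of_compression`). Shifting lowers the sum of all endpoints, so it ends with a family
that is stable under every shift (`exists_shifted`).

If `n < 2k`, there are at most `C(2k-1, 2)` pairs altogether. Otherwise, suppose that a stable family
has no matching of size `k`. Then one of the nested pairs `{t, 2k-1-t}`,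
`t < k`, is missing, and by stability each edge `{a, b}` with `a < b` has `a < t` or
`b < 2k-1-t`. Hence there are at most `C(2k-1-t, 2) + t (n-2k+1+t)` edges, and this
expression is convex in `t`, so it is largest at `t = 0` or `t = k-1` (`bound_le`), which gives the
two terms of the maximum.
-/

open SimpleGraph

/-- The matching number of `G` restricted to a vertex subset `S`. -/
noncomputable def nuOn {V : Type*} (G : SimpleGraph V) (S : Set V) : ℕ :=
  sSup {n | ∃ M : G.Subgraph, M.IsMatching ∧ M.verts ⊆ S ∧ M.edgeSet.ncard = n}

/-- The matching number `ν(G)`. -/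
noncomputable def nu {V : Type*} (G : SimpleGraph V) : ℕ := nuOn G Set.univ

namespace EGShift

open Finset

/-- The family `A` of finite sets of naturals contains `k` pairwise disjoint pairs: `f (t, false)`
and `f (t, true)` are the two ends of the `t`-th pair. -/
def HasMatching (A : Finset (Finset ℕ)) (k : ℕ) : Prop :=
  ∃ f : Fin k × Bool → ℕ, Function.Injective f ∧ ∀ t, {f (t, false), f (t, true)} ∈ A

/-- Shifting does not create matchings. Since `i` lies in at most one pair of a matching of the
shifted family, at most one pair is new; if there is one, exchanging the roles of `i` and `j`
throughout turns the matching into one of the original family. -/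
theorem HasMatching.of_compression {A : Finset (Finset ℕ)} {i j k : ℕ}
    (h : HasMatching (UV.compression {i} {j} A) k) : HasMatching A k := by
  obtain ⟨f, hf, hfA⟩ := h
  by_cases hall : ∀ t, {f (t, false), f (t, true)} ∈ A
  · exact ⟨f, hf, hall⟩
  push Not at hall
  obtain ⟨s, hs⟩ := hall
  have his := UV.le_of_mem_compression_of_notMem (hfA s) hs
  have hjs := UV.disjoint_of_mem_compression_of_notMem (hfA s) hs
  have hsA := UV.sup_sdiff_mem_of_mem_compression_of_notMem (hfA s) hs
  simp only [singleton_subset_iff, mem_insert, mem_singleton] at his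
  simp only [disjoint_singleton_left, mem_insert, mem_singleton, not_or] at hjs
  refine ⟨Equiv.swap i j ∘ f, (Equiv.swap i j).injective.comp hf, fun t => ?_⟩
  simp only [Function.comp]
  by_cases hts : t = s
  · subst hts
    have hne : f (t, false) ≠ f (t, true) := hf.ne (by simp)
    convert hsA using 1
    ext z
    simp only [mem_insert, mem_singleton, sup_eq_union, mem_sdiff, mem_union]
    grind
  · have hit : ∀ b, i ≠ f (t, b) := by
      rintro b rfl
      rcases his with h | h <;> exact hts (congrArg Prod.fst (hf h))
    by_cases hjt : j ∈ ({f (t, false), f (t, true)} : Finset ℕ)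
    · have := UV.sup_sdiff_mem_of_mem_compression (hfA t) (by simpa using hjt)
        (by simp [hit])
      have hne : f (t, false) ≠ f (t, true) := hf.ne (by simp)
      have h0 := hit false
      have h1 := hit true
      simp only [mem_insert, mem_singleton] at hjt
      convert this using 1
      ext z
      simp only [mem_insert, mem_singleton, sup_eq_union, mem_sdiff, mem_union]
      grind
    · simp only [mem_insert, mem_singleton, not_or] at hjt
      rw [Equiv.swap_apply_of_ne_of_ne (hit false).symm (Ne.symm hjt.1),
        Equiv.swap_apply_of_ne_of_ne (hit true).symm (Ne.symm hjt.2)]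
      by_contra htA
      have := UV.le_of_mem_compression_of_notMem (hfA t) htA
      simp [hit] at this

theorem sum_compress_lt {i j : ℕ} (hij : i < j) {e : Finset ℕ}
    (he : UV.compress {i} {j} e ≠ e) : ∑ x ∈ UV.compress {i} {j} e, x < ∑ x ∈ e, x := by
  unfold UV.compress at he ⊢
  split_ifs at he ⊢ with h
  · obtain ⟨hi, hj⟩ := h
    simp only [disjoint_singleton_left] at hi
    simp only [singleton_subset_iff] at hj
    have h1 : (e ⊔ {i}) \ {j} = insert i (e.erase j) := by
      ext z
      simp only [sup_eq_union, mem_sdiff, mem_union, mem_singleton, mem_insert, mem_erase]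
      grind
    rw [h1, sum_insert (by simp [hi]), ← add_sum_erase e (fun x => x) hj]
    omega
  · exact absurd rfl he

/-- The total of all elements of all members of `A`, counted with multiplicity. It drops at every
nontrivial shift, so repeated shifting terminates. -/
def weight (A : Finset (Finset ℕ)) : ℕ := ∑ e ∈ A, ∑ x ∈ e, x

theorem weight_compression_lt {A : Finset (Finset ℕ)} {i j : ℕ} (hij : i < j)
    (hA : UV.compression {i} {j} A ≠ A) : weight (UV.compression {i} {j} A) < weight A := by
  have hU : {e ∈ A | UV.compress {i} {j} e ∈ A} ∪ {e ∈ A | UV.compress {i} {j} e ∉ A} = A :=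
    filter_union_filter_not_eq _ _
  have hne : {e ∈ A | UV.compress {i} {j} e ∉ A}.Nonempty := by
    rw [nonempty_iff_ne_empty]
    intro h0
    apply hA
    rw [UV.compression, filter_image, h0, image_empty, union_empty]
    rwa [h0, union_empty] at hU
  rw [weight, weight, UV.compression, sum_union UV.compress_disjoint]
  conv_rhs => rw [← hU]
  rw [sum_union (disjoint_filter_filter_not _ _ _), add_lt_add_iff_left, filter_image,
    sum_image UV.compress_injOn]
  refine sum_lt_sum_of_nonempty hne fun e he => sum_compress_lt hij ?_
  intro h
  rw [mem_filter, h] at he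
  exact he.2 he.1

theorem compression_subset_powersetCard {A : Finset (Finset ℕ)} {i j n : ℕ} (hij : i < j)
    (hA : A ⊆ powersetCard 2 (range n)) :
    UV.compression {i} {j} A ⊆ powersetCard 2 (range n) := by
  intro e he
  rw [UV.mem_compression] at he
  rcases he with he | ⟨-, b, hb, rfl⟩
  · exact hA he.1
  have hb' := mem_powersetCard.1 (hA hb)
  rw [mem_powersetCard, UV.card_compress (by simp)]
  refine ⟨?_, hb'.2⟩
  unfold UV.compress
  split_ifs with h
  · have hj : j ∈ b := by simpa using h.2
    have hjn := mem_range.1 (hb'.1 hj)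
    intro z hz
    simp only [sup_eq_union, mem_sdiff, mem_union, mem_singleton] at hz
    rcases hz.1 with h | rfl
    · exact hb'.1 h
    · exact mem_range.2 (by omega)
  · exact hb'.1

theorem exists_shifted {n k : ℕ} (A : Finset (Finset ℕ)) (hA : A ⊆ powersetCard 2 (range n))
    (hk : ¬ HasMatching A k) :
    ∃ B : Finset (Finset ℕ), B.card = A.card ∧ B ⊆ powersetCard 2 (range n) ∧
      ¬ HasMatching B k ∧ ∀ i j, i < j → UV.IsCompressed {i} {j} B := by
  by_cases h : ∀ i j, i < j → UV.IsCompressed {i} {j} A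
  · exact ⟨A, rfl, hA, hk, h⟩
  push Not at h
  obtain ⟨i, j, hij, hne⟩ := h
  have hlt := weight_compression_lt hij hne
  obtain ⟨B, h1, h2⟩ := exists_shifted (UV.compression {i} {j} A)
    (compression_subset_powersetCard hij hA) (fun h => hk h.of_compression)
  exact ⟨B, h1.trans (UV.card_compression _ _ _), h2⟩
termination_by weight A

theorem mem_of_shifted {B : Finset (Finset ℕ)} (hB : ∀ i j, i < j → UV.IsCompressed {i} {j} B)
    {i j x : ℕ} (hij : i ≤ j) (hix : i ≠ x) (hjx : j ≠ x) (h : {j, x} ∈ B) : {i, x} ∈ B := by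
  rcases hij.eq_or_lt with rfl | hij
  · exact h
  have h' := h
  rw [← (hB i j hij).eq] at h'
  have := UV.sup_sdiff_mem_of_mem_compression h' (by simp) (by simp [hix, hij.ne])
  convert this using 1
  ext z
  simp only [mem_insert, mem_singleton, sup_eq_union, mem_sdiff, mem_union]
  grind

theorem two_mul_choose (m : ℕ) : 2 * (m + 1).choose 2 = (m + 1) * m := by
  rw [Nat.choose_two_right, Nat.add_sub_cancel]
  exact Nat.mul_div_cancel' (Nat.even_mul_pred_self (m + 1)).two_dvd

/-- Convexity in `t`: the bound obtained from a missing pair `{t, 2k-1-t}` is largest at `t = 0` or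
at `t = k - 1`. -/
theorem bound_le {n k t : ℕ} (htk : t < k) (hn : 2 * k ≤ n) :
    (2 * k - 1 - t).choose 2 + t * (n - (2 * k - 1 - t)) ≤
      max ((2 * k - 1).choose 2) ((k - 1).choose 2 + (k - 1) * (n - k + 1)) := by
  obtain ⟨r, rfl⟩ := Nat.exists_eq_add_of_lt htk
  obtain ⟨m, rfl⟩ := Nat.exists_eq_add_of_le hn
  have e1 : 2 * (t + r + 1) - 1 - t = t + 2 * r + 1 := by omega
  have e2 : 2 * (t + r + 1) + m - (t + 2 * r + 1) = m + 1 + t := by omega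
  have e3 : 2 * (t + r + 1) - 1 = 2 * t + 2 * r + 1 := by omega
  have e4 : 2 * (t + r + 1) + m - (t + r + 1) + 1 = t + r + 2 + m := by omega
  rw [e1, e2, e3, e4, Nat.add_sub_cancel]
  have c1 := two_mul_choose (t + 2 * r)
  have c2 := two_mul_choose (2 * t + 2 * r)
  have c3 : 2 * (t + r).choose 2 + (t + r) = (t + r) * (t + r) := by
    rcases Nat.eq_zero_or_pos (t + r) with h | h
    · simp [h]
    · obtain ⟨q, hq⟩ := Nat.exists_eq_add_of_lt h
      rw [hq, zero_add, two_mul_choose]; ring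
  rw [le_max_iff]
  by_cases hc : 2 * m + 1 ≤ t + 4 * r
  · left
    have := Nat.mul_le_mul_left t hc
    nlinarith
  · right
    have : r * r ≤ r * (2 * t + 1 + 2 * m) := Nat.mul_le_mul_left r (by omega)
    nlinarith

/-- The theorem for edge sets presented as families of pairs in `{0, …, n-1}`. -/
theorem card_le {n k : ℕ} {A : Finset (Finset ℕ)} (hk : 1 ≤ k)
    (hA : A ⊆ powersetCard 2 (range n)) (hM : ¬ HasMatching A k) :
    A.card ≤ max ((2 * k - 1).choose 2) ((k - 1).choose 2 + (k - 1) * (n - k + 1)) := by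
  rcases Nat.lt_or_ge n (2 * k) with hn | hn
  · refine le_max_of_le_left ((card_le_card hA).trans ?_)
    rw [card_powersetCard, card_range]
    exact Nat.choose_le_choose 2 (by omega)
  obtain ⟨B, hBA, hB, hBM, hsh⟩ := exists_shifted A hA hM
  rw [← hBA]
  -- The nested pairs `{t, 2k-1-t}`, `t < k`, are disjoint, so one of them is missing.
  obtain ⟨t, htk, ht⟩ : ∃ t < k, {t, 2 * k - 1 - t} ∉ B := by
    by_contra! hall
    refine hBM ⟨fun p => bif p.2 then 2 * k - 1 - p.1 else p.1, ?_, fun t => hall t t.2⟩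
    rintro ⟨a, b⟩ ⟨a', b'⟩ hab
    have := a.2
    have := a'.2
    cases b <;> cases b' <;> simp at hab ⊢ <;> omega
  refine le_trans ?_ (bound_le htk hn)
  have hsub : B ⊆ powersetCard 2 (range (2 * k - 1 - t)) ∪
      (range t ×ˢ Ico (2 * k - 1 - t) n).image (fun p => {p.1, p.2}) := by
    intro e he
    obtain ⟨hen, he2⟩ := mem_powersetCard.1 (hB he)
    obtain ⟨a, b, hab, rfl⟩ : ∃ a b, a < b ∧ e = {a, b} := by
      obtain ⟨a, b, hab, rfl⟩ := card_eq_two.1 he2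
      rcases hab.lt_or_gt with h | h
      · exact ⟨a, b, h, rfl⟩
      · exact ⟨b, a, h, pair_comm a b⟩
    have hbn : b < n := mem_range.1 (hen (by simp))
    by_cases hb : b < 2 * k - 1 - t
    · refine mem_union_left _ (mem_powersetCard.2 ⟨?_, he2⟩)
      intro z hz
      simp only [mem_insert, mem_singleton] at hz
      rw [mem_range]
      omega
    · refine mem_union_right _ (mem_image.2 ⟨(a, b), ?_, rfl⟩)
      simp only [mem_product, mem_range, mem_Ico]
      refine ⟨?_, by omega, hbn⟩
      by_contra hat
      apply ht
      have h1 : {t, b} ∈ B := mem_of_shifted hsh (by omega) (by omega) (by omega) he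
      rw [pair_comm] at h1 ⊢
      exact mem_of_shifted hsh (by omega) (by omega) (by omega) h1
  refine (card_le_card hsub).trans ((card_union_le _ _).trans ?_)
  gcongr
  · simp
  · refine card_image_le.trans ?_
    simp

theorem le_nu {V : Type*} [Fintype V] {G : SimpleGraph V} {k : ℕ} (f : Fin k × Bool → V)
    (hf : Function.Injective f) (hG : ∀ t, G.Adj (f (t, false)) (f (t, true))) : k ≤ nu G := by
  let M : G.Subgraph :=
    { verts := Set.range f
      Adj := fun u v => ∃ t b, u = f (t, b) ∧ v = f (t, !b)
      adj_sub := by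
        rintro u v ⟨t, b, rfl, rfl⟩
        cases b
        · exact hG t
        · exact (hG t).symm
      edge_vert := by
        rintro u v ⟨t, b, rfl, rfl⟩
        exact ⟨_, rfl⟩
      symm := ⟨by
        rintro u v ⟨t, b, rfl, rfl⟩
        exact ⟨t, !b, rfl, by simp⟩⟩ }
  have hM : M.IsMatching := by
    rintro _ ⟨⟨t, b⟩, rfl⟩
    refine ⟨f (t, !b), ⟨t, b, rfl, rfl⟩, ?_⟩
    rintro w ⟨t', b', h, rfl⟩
    obtain ⟨rfl, rfl⟩ := Prod.mk.inj (hf h)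
    rfl
  have hcard : k ≤ M.edgeSet.ncard := by
    let g : Fin k → Sym2 V := fun t => s(f (t, false), f (t, true))
    have hg : Function.Injective g := by
      intro t t' h
      have := Sym2.eq_iff.1 h
      rcases this with h | h <;> exact congrArg Prod.fst (hf h.1)
    calc k = (Set.range g).ncard := by
            rw [← Set.image_univ, Set.ncard_image_of_injective _ hg, Set.ncard_univ]; simp
      _ ≤ _ := by
            refine Set.ncard_le_ncard ?_ (Set.toFinite _)
            rintro _ ⟨t, rfl⟩
            exact ⟨t, false, rfl, rfl⟩
  refine hcard.trans (le_csSup ?_ ⟨M, hM, Set.subset_univ _, rfl⟩)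
  refine ⟨G.edgeSet.ncard, ?_⟩
  rintro _ ⟨M', -, -, rfl⟩
  exact Set.ncard_le_ncard M'.edgeSet_subset (Set.toFinite _)

end EGShift

/-- Erdős–Gallai: if `ν(G) ≤ k-1`, then
`e(G) ≤ max{C(2k-1,2), C(k-1,2) + (k-1)(n-k+1)}`. -/
theorem erdos_gallai_matching {V : Type*} [Fintype V] (G : SimpleGraph V) (k : ℕ)
    (hk : 1 ≤ k) (h : nu G ≤ k - 1) :
    G.edgeSet.ncard ≤
      max ((2 * k - 1).choose 2)
        ((k - 1).choose 2 + (k - 1) * (Fintype.card V - k + 1)) := by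
  classical
  obtain ⟨φ⟩ : Nonempty (V ≃ Fin (Fintype.card V)) := ⟨Fintype.equivFin V⟩
  set ψ : V → ℕ := fun v => (φ v : ℕ) with hψ
  have hψi : Function.Injective ψ := fun a b hab => φ.injective (Fin.ext hab)
  set A : Finset (Finset ℕ) := G.edgeFinset.image (fun e => (e.map ψ).toFinset) with hA
  have hcard : A.card = G.edgeSet.ncard := by
    rw [hA, Finset.card_image_of_injective, ← SimpleGraph.coe_edgeFinset, Set.ncard_coe_finset]
    intro e e' hee
    apply Sym2.map.injective hψi
    ext x
    simpa using congrArg (x ∈ ·) hee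
  rw [← hcard]
  refine EGShift.card_le hk ?_ ?_
  · intro e' he'
    obtain ⟨e, he, rfl⟩ := Finset.mem_image.1 he'
    clear he'
    induction e with | _ x y =>
    have hxy : G.Adj x y := by simpa using he
    rw [Sym2.map_mk, Finset.mem_powersetCard]
    have : (s(ψ x, ψ y)).toFinset = {ψ x, ψ y} := by ext; simp
    rw [this]
    refine ⟨?_, Finset.card_pair (hψi.ne hxy.ne)⟩
    intro z hz
    simp only [Finset.mem_insert, Finset.mem_singleton] at hz
    rcases hz with rfl | rfl <;> simp [hψ]
  · rintro ⟨f, hf, hfA⟩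
    -- Each pair comes from an edge; name its ends in the order in which `f` lists them.
    have key : ∀ t, ∃ x y, G.Adj x y ∧ ψ x = f (t, false) ∧ ψ y = f (t, true) := by
      intro t
      obtain ⟨e, he, hft⟩ := Finset.mem_image.1 (hfA t)
      induction e with | _ x y =>
      have hxy : G.Adj x y := by simpa using he
      have h1 : ∀ z, (z = ψ x ∨ z = ψ y) ↔ (z = f (t, false) ∨ z = f (t, true)) := by
        intro z
        simpa using congrArg (z ∈ ·) hft
      have hne : f (t, false) ≠ f (t, true) := hf.ne (by simp)
      rcases (h1 _).2 (Or.inl rfl) with h2 | h2 <;> rcases (h1 _).2 (Or.inr rfl) with h3 | h3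
      · exact absurd (h2.trans h3.symm) hne
      · exact ⟨x, y, hxy, h2.symm, h3.symm⟩
      · exact ⟨y, x, hxy.symm, h2.symm, h3.symm⟩
      · exact absurd (h2.trans h3.symm) hne
    choose x y hxy hx hy using key
    have := EGShift.le_nu (G := G) (k := k) (fun p => bif p.2 then y p.1 else x p.1) (by
      rintro ⟨t, b⟩ ⟨t', b'⟩ hp
      apply hf
      have hp' := congrArg ψ hp
      cases b <;> cases b' <;> simpa only [cond_true, cond_false, hx, hy] using hp') (fun t => hxy t)
    omega
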